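/- arXiv:0912.0223 — 2 statements merged into one kernel-verified Lean document; each statement's English description precedes it below -/
import Mathlib

section
/- (One Radius Theorem.) Fix ρ > 0 and an integer k ≥ 1. Let μ, ν ∈ ℂ with μ ≠ ν, and let α, β ∈ ℂ satisfy μ = (α·k − α²)/ρ² and ν = (β·k − β²)/ρ². Set p = max(|Im α|, |Im β|) and assume p > 0. Let φ_μ, φ_ν : ℝ → ℂ be normalized radial eigenfunctions on [0, ∞) with eigenvalues μ and ν respectively. Then φ_μ(r) ≠ φ_ν(r) for every r ∈ (0, πρ/(2p)]. -/
open MeasureTheory Real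

namespace OneRadius

structure Sol (k : ℕ) (l : ℂ) (f f1 : ℝ → ℂ) : Prop where
  cont : ContinuousOn f (Set.Ici 0)
  zero : f 0 = 1
  d1 : ∀ r : ℝ, 0 < r → HasDerivAt f (f1 r) r
  d2 : ∀ r : ℝ, 0 < r → HasDerivAt f1
    (-((k : ℂ) * ((Real.cosh r / Real.sinh r : ℝ) : ℂ)) * f1 r - l * f r) r

lemma Sol.tendsto {k l f f1} (h : Sol k l f f1) :
    Filter.Tendsto f (nhdsWithin 0 (Set.Ioi 0)) (nhds 1) := by
  have := (h.cont 0 (by simp)).mono_left (nhdsWithin_mono 0 Set.Ioi_subset_Ici_self)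
  rwa [h.zero] at this

lemma wronskian_const {k l f f1 g g1} (hf : Sol k l f f1) (hg : Sol k l g g1) :
    ∃ C : ℂ, ∀ r : ℝ, 0 < r →
      ((Real.sinh r : ℝ) : ℂ) ^ k * (f1 r * g r - f r * g1 r) = C := by
  have hd : ∀ r : ℝ, 0 < r → HasDerivAt
      (fun r : ℝ => ((Real.sinh r : ℝ) : ℂ) ^ k * (f1 r * g r - f r * g1 r)) 0 r := by
    intro r hr
    have hs : (0:ℝ) < Real.sinh r := Real.sinh_pos_iff.2 hr
    have hs' : ((Real.sinh r : ℝ) : ℂ) ≠ 0 := by exact_mod_cast hs.ne'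
    have h1 := ((Real.hasDerivAt_sinh r).ofReal_comp.pow k).mul
      (((hf.d2 r hr).mul (hg.d1 r hr)).sub ((hf.d1 r hr).mul (hg.d2 r hr)))
    refine h1.congr_deriv ?_
    rcases k with _ | k
    · simp; ring
    · simp only [Pi.pow_apply, Pi.mul_apply, Pi.sub_apply, Nat.add_sub_cancel]
      push_cast
      push_cast at hs'
      field_simp
      ring
  refine ⟨((Real.sinh 1 : ℝ) : ℂ) ^ k * (f1 1 * g 1 - f 1 * g1 1), fun r hr => ?_⟩
  · refine (convex_Ioi (0:ℝ)).is_const_of_fderivWithin_eq_zero (𝕜 := ℝ)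
      (f := (fun r : ℝ => ((Real.sinh r : ℝ) : ℂ) ^ k * (f1 r * g r - f r * g1 r)))
      (fun x hx => (hd x hx).differentiableAt.differentiableWithinAt) ?_ hr (by simp)
    intro x hx
    have := (hd x hx).hasFDerivAt.hasFDerivWithinAt (s := Set.Ioi 0)
    rw [this.fderivWithin (isOpen_Ioi.uniqueDiffWithinAt hx)]
    ext; simp

lemma log_sinh_tendsto : Filter.Tendsto (fun r : ℝ => Real.log (Real.sinh r))
    (nhdsWithin 0 (Set.Ioi 0)) Filter.atBot := by
  refine Real.tendsto_log_nhdsGT_zero.comp ?_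
  refine tendsto_nhdsWithin_iff.2 ⟨?_, ?_⟩
  · have := (Real.continuous_sinh.tendsto 0).mono_left (nhdsWithin_le_nhds (s := Set.Ioi 0))
    simpa using this
  · filter_upwards [self_mem_nhdsWithin] with r hr
    exact Real.sinh_pos_iff.2 hr

/-- near zero agreement -/
lemma local_uniq {k l f f1 g g1} (hk : 1 ≤ k) (hf : Sol k l f f1) (hg : Sol k l g g1) :
    ∃ δ > 0, f δ = g δ ∧ f1 δ = g1 δ ∧ ∀ r ∈ Set.Ioo 0 (2 * δ), f r = g r := by
  obtain ⟨C, hC⟩ := wronskian_const hf hg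
  -- neighbourhood
  have hinv : Filter.Tendsto (fun r => (1 / (g r) ^ 2).re) (nhdsWithin 0 (Set.Ioi 0)) (nhds 1) := by
    have h1 : Filter.Tendsto (fun r => 1 / (g r) ^ 2) (nhdsWithin 0 (Set.Ioi 0))
        (nhds (1 / 1 ^ 2)) := Filter.Tendsto.div tendsto_const_nhds (hg.tendsto.pow 2) (by simp)
    have := (Complex.continuous_re.tendsto _).comp h1
    rw [one_pow, div_one, Complex.one_re] at this
    exact this
  have hsinh : Filter.Tendsto Real.sinh (nhdsWithin 0 (Set.Ioi 0)) (nhds 0) := by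
    have := (Real.continuous_sinh.tendsto 0).mono_left (nhdsWithin_le_nhds (s := Set.Ioi 0))
    simpa using this
  have hcosh : Filter.Tendsto Real.cosh (nhdsWithin 0 (Set.Ioi 0)) (nhds 1) := by
    have := (Real.continuous_cosh.tendsto 0).mono_left (nhdsWithin_le_nhds (s := Set.Ioi 0))
    simpa using this
  have hev : ∀ᶠ r in nhdsWithin (0:ℝ) (Set.Ioi 0), (1 / 2 < (1 / (g r) ^ 2).re) ∧
      Real.sinh r < 1 ∧ Real.cosh r < 2 ∧ g r ≠ 0 := by
    filter_upwards [hinv.eventually_const_lt (by norm_num : (1/2:ℝ) < 1),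
      hsinh.eventually_lt_const (by norm_num : (0:ℝ) < 1),
      hcosh.eventually_lt_const (by norm_num : (1:ℝ) < 2)] with r h1 h2 h3
    refine ⟨h1, h2, h3, fun h => ?_⟩
    rw [h] at h1; norm_num at h1
  obtain ⟨d, hd0, hd⟩ := mem_nhdsGT_iff_exists_Ioo_subset.1 hev
  have hd0 : 0 < d := hd0
  have hq : ∀ r ∈ Set.Ioo 0 d, HasDerivAt (fun r => f r / g r)
      (C / ((Real.sinh r : ℝ) : ℂ) ^ k * (1 / (g r) ^ 2)) r := by
    intro r hr
    have hg0 : g r ≠ 0 := (hd hr).2.2.2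
    have hs' : ((Real.sinh r : ℝ) : ℂ) ≠ 0 := by exact_mod_cast (Real.sinh_pos_iff.2 hr.1).ne'
    refine ((hf.d1 r hr.1).div (hg.d1 r hr.1) hg0).congr_deriv ?_
    rw [← hC r hr.1]
    field_simp
  have hqt : Filter.Tendsto (fun r => f r / g r) (nhdsWithin 0 (Set.Ioi 0)) (nhds 1) := by
    have := hf.tendsto.div hg.tendsto (by simp)
    rw [div_one] at this
    exact this
  have hmem : Set.Ioo 0 d ∈ nhdsWithin (0:ℝ) (Set.Ioi 0) := Ioo_mem_nhdsGT hd0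
  have hC0 : C = 0 := by
    by_contra hCne
    let h : ℝ → ℝ := fun r => ((f r / g r) / C).re - (1/4) * Real.log (Real.sinh r)
    have hh : ∀ r ∈ Set.Ioo 0 d, HasDerivAt h
        (((1 / (Real.sinh r)) ^ k * (1 / (g r) ^ 2).re) - (1/4) * (Real.cosh r / Real.sinh r)) r := by
      intro r hr
      have hs : (0:ℝ) < Real.sinh r := Real.sinh_pos_iff.2 hr.1
      have h1 := ((hq r hr).div_const C)
      have h2 := Complex.reCLM.hasFDerivAt.comp_hasDerivAt r h1
      have h3 := (((Real.hasDerivAt_sinh r).log hs.ne').const_mul (1/4))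
      refine (h2.sub h3).congr_deriv ?_
      congr 1
      have : C / ((Real.sinh r : ℝ) : ℂ) ^ k * (1 / (g r) ^ 2) / C =
        (((1 / (Real.sinh r)) ^ k : ℝ) : ℂ) * (1 / (g r) ^ 2) := by
        push_cast
        rw [one_div_pow]
        field_simp
      rw [this, Complex.reCLM_apply, Complex.re_ofReal_mul]
    have hmono : MonotoneOn h (Set.Ioo 0 d) := by
      refine monotoneOn_of_deriv_nonneg (convex_Ioo 0 d)
        (fun r hr => (hh r hr).continuousAt.continuousWithinAt) ?_ ?_
      · rw [interior_Ioo]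
        exact fun r hr => (hh r hr).differentiableAt.differentiableWithinAt
      · rw [interior_Ioo]
        intro r hr
        rw [(hh r hr).deriv]
        obtain ⟨h1, h2, h3, -⟩ := hd hr
        have hs : (0:ℝ) < Real.sinh r := Real.sinh_pos_iff.2 hr.1
        have h4 : 1 ≤ 1 / Real.sinh r := by rw [le_div_iff₀ hs]; linarith
        have h5 : 1 / Real.sinh r ≤ (1 / Real.sinh r) ^ k := le_self_pow₀ h4 (by omega)
        have h6 : Real.cosh r / Real.sinh r ≤ 2 * (1 / Real.sinh r) := by
          rw [mul_one_div]; gcongr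
        have h7 : (1 / Real.sinh r) ^ k * (1/2) ≤ (1 / Real.sinh r) ^ k * (1 / (g r) ^ 2).re := by
          gcongr
        linarith
    have htop : Filter.Tendsto h (nhdsWithin 0 (Set.Ioi 0)) Filter.atTop := by
      have h1 : Filter.Tendsto (fun r => ((f r / g r) / C).re) (nhdsWithin 0 (Set.Ioi 0))
          (nhds ((1 / C).re)) := (Complex.continuous_re.tendsto _).comp (hqt.div_const C)
      have h2 : Filter.Tendsto (fun r => -((1/4:ℝ) * Real.log (Real.sinh r)))
          (nhdsWithin 0 (Set.Ioi 0)) Filter.atTop := by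
        refine Filter.tendsto_neg_atBot_atTop.comp ?_
        exact log_sinh_tendsto.const_mul_atBot (by norm_num)
      have := h1.add_atTop h2
      simpa [h, sub_eq_add_neg] using this
    have hm : Set.Ioo 0 (d/2) ∈ nhdsWithin (0:ℝ) (Set.Ioi 0) := Ioo_mem_nhdsGT (by linarith)
    obtain ⟨r, hr1, hr2⟩ := ((htop.eventually_gt_atTop (h (d/2))).and hm).exists
    have := hmono (a := r) (b := d/2) ⟨hr2.1, by linarith [hr2.2]⟩ ⟨by linarith, by linarith⟩ hr2.2.le
    linarith
  have hconst : ∀ r ∈ Set.Ioo 0 d, f r = g r := by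
    have hc : ∀ r ∈ Set.Ioo 0 d, ∀ s ∈ Set.Ioo 0 d, f r / g r = f s / g s := by
      intro r hr s hs
      refine (convex_Ioo (0:ℝ) d).is_const_of_fderivWithin_eq_zero (𝕜 := ℝ)
        (f := fun r => f r / g r)
        (fun x hx => (hq x hx).differentiableAt.differentiableWithinAt) ?_ hr hs
      intro x hx
      have := (hq x hx).hasFDerivAt.hasFDerivWithinAt (s := Set.Ioo 0 d)
      rw [this.fderivWithin (isOpen_Ioo.uniqueDiffWithinAt hx)]
      ext; simp [hC0]
    intro r hr
    have h1 : Filter.Tendsto (fun s => f s / g s) (nhdsWithin 0 (Set.Ioi 0)) (nhds (f r / g r)) := by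
      refine tendsto_const_nhds.congr' ?_
      filter_upwards [hmem] with s hs
      exact hc r hr s hs
    have h2 := tendsto_nhds_unique h1 hqt
    rwa [div_eq_one_iff_eq (hd hr).2.2.2] at h2
  have hdm : d/2 ∈ Set.Ioo 0 d := ⟨by linarith, by linarith⟩
  refine ⟨d/2, by linarith, hconst _ hdm, ?_, ?_⟩
  · have h1 := hf.d1 _ hdm.1
    have h2 : HasDerivAt f (g1 (d/2)) (d/2) := by
      refine (hg.d1 _ hdm.1).congr_of_eventuallyEq ?_
      filter_upwards [isOpen_Ioo.mem_nhds hdm] with r hr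
      exact hconst r hr
    exact h1.unique h2
  · intro r hr
    exact hconst r ⟨hr.1, by linarith [hr.2]⟩

lemma uniq {k l f f1 g g1} (hk : 1 ≤ k) (hf : Sol k l f f1) (hg : Sol k l g g1) :
    ∀ r : ℝ, 0 < r → f r = g r := by
  obtain ⟨δ, hδ, e0, e1, he⟩ := local_uniq hk hf hg
  intro R hR
  by_cases hRδ : R < δ
  · exact he R ⟨hR, by linarith⟩
  push Not at hRδ
  -- energy estimate
  have hcont : ContinuousOn (fun r : ℝ => (k : ℝ) * (Real.cosh r / Real.sinh r)) (Set.Icc δ R) := by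
    refine continuousOn_const.mul (Real.continuous_cosh.continuousOn.div
      Real.continuous_sinh.continuousOn ?_)
    intro x hx
    exact (Real.sinh_pos_iff.2 (lt_of_lt_of_le hδ hx.1)).ne'
  obtain ⟨M, hM⟩ := isCompact_Icc.exists_bound_of_continuousOn hcont
  let w : ℝ → ℂ × ℂ := fun r => (f r - g r, f1 r - g1 r)
  let w' : ℝ → ℂ × ℂ := fun r => (f1 r - g1 r,
    (-((k : ℂ) * ((Real.cosh r / Real.sinh r : ℝ) : ℂ)) * f1 r - l * f r) -
    (-((k : ℂ) * ((Real.cosh r / Real.sinh r : ℝ) : ℂ)) * g1 r - l * g r))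
  have hw : ∀ r, 0 < r → HasDerivAt w (w' r) r := fun r hr =>
    ((hf.d1 r hr).sub (hg.d1 r hr)).prodMk ((hf.d2 r hr).sub (hg.d2 r hr))
  have key := eq_zero_of_abs_deriv_le_mul_abs_self_of_eq_zero_right (f := w) (f' := w')
    (K := 1 + M + ‖l‖) (a := δ) (b := R)
    (fun x hx => (hw x (lt_of_lt_of_le hδ hx.1)).continuousAt.continuousWithinAt)
    (fun x hx => (hw x (lt_of_lt_of_le hδ hx.1)).hasDerivWithinAt)
    (by simp [w, e0, e1]) ?_ R ⟨hRδ, le_rfl⟩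
  · have := congrArg Prod.fst key
    simpa [w, sub_eq_zero] using this
  · intro x hx
    have hx' : x ∈ Set.Icc δ R := ⟨hx.1, hx.2.le⟩
    have hMx := hM x hx'
    have hM0 : 0 ≤ M := (norm_nonneg _).trans hMx
    have n1 : ‖f x - g x‖ ≤ ‖w x‖ := norm_fst_le (w x)
    have n2 : ‖f1 x - g1 x‖ ≤ ‖w x‖ := norm_snd_le (w x)
    have hl := norm_nonneg l
    have hw0 := norm_nonneg (w x)
    rw [Prod.norm_def]
    refine max_le ?_ ?_
    · refine n2.trans ?_
      nlinarith [mul_nonneg hM0 hw0, mul_nonneg hl hw0]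
    · have : (w' x).2 = -(((k : ℝ) * (Real.cosh x / Real.sinh x) : ℝ) : ℂ) * (f1 x - g1 x)
          - l * (f x - g x) := by
        simp only [w']; push_cast; ring
      rw [this]
      refine (norm_sub_le _ _).trans ?_
      rw [norm_mul, norm_mul, norm_neg, Complex.norm_real]
      have a1 := mul_le_mul hMx n2 (norm_nonneg _) hM0
      have a2 := mul_le_mul_of_nonneg_left n1 hl
      nlinarith


lemma core_pos {c d : ℂ} (hc : c ≠ 0) (hd : d ≠ 0) (hc1 : 0 ≤ c.re) (hd1 : 0 ≤ d.re)
    {T : ℝ} (hT : (|c.im| + |d.im|) * T ≤ π / 2) :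
    ∃ z : ℂ, ∀ t : ℝ, 0 < t → t < T →
      0 < (z * (Complex.sinh (c * t) * Complex.sinh (d * t))).re := by
  have hre : ∀ (e : ℂ) (t : ℝ), (Complex.sinh (e * t)).re =
      Real.sinh (e.re * t) * Real.cos (e.im * t) := by
    intro e t
    have : e * t = ((e.re * t : ℝ) : ℂ) + ((e.im * t : ℝ) : ℂ) * Complex.I := by
      apply Complex.ext <;> simp
    rw [this, Complex.sinh_add, Complex.sinh_mul_I, Complex.cosh_mul_I]
    simp [← Complex.ofReal_sinh, ← Complex.ofReal_cosh, ← Complex.ofReal_sin, ← Complex.ofReal_cos,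
      -Complex.ofReal_mul]
  have him : ∀ (e : ℂ) (t : ℝ), (Complex.sinh (e * t)).im =
      Real.cosh (e.re * t) * Real.sin (e.im * t) := by
    intro e t
    have : e * t = ((e.re * t : ℝ) : ℂ) + ((e.im * t : ℝ) : ℂ) * Complex.I := by
      apply Complex.ext <;> simp
    rw [this, Complex.sinh_add, Complex.sinh_mul_I, Complex.cosh_mul_I]
    simp [← Complex.ofReal_sinh, ← Complex.ofReal_cosh, ← Complex.ofReal_sin, ← Complex.ofReal_cos,
      -Complex.ofReal_mul]
  -- quadrant facts
  have hRe0 : ∀ e : ℂ, 0 ≤ e.re → |e.im| ≤ |c.im| + |d.im| → ∀ t : ℝ, 0 < t → t < T →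
      0 ≤ (Complex.sinh (e * t)).re ∧ (0 < e.re → 0 < (Complex.sinh (e * t)).re) ∧
      (e.re = 0 → (Complex.sinh (e * t)).re = 0) ∧
      (0 < e.im → 0 < (Complex.sinh (e * t)).im) ∧ (e.im < 0 → (Complex.sinh (e * t)).im < 0) ∧
      (e.im = 0 → (Complex.sinh (e * t)).im = 0) := by
    intro e he1 he2 t ht htT
    have hb : |e.im * t| < π / 2 ∨ e.im = 0 := by
      by_cases h0 : e.im = 0
      · exact Or.inr h0
      · left
        rw [abs_mul, abs_of_pos ht]
        have := abs_pos.2 h0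
        calc |e.im| * t < |e.im| * T := by gcongr
          _ ≤ (|c.im| + |d.im|) * T := by gcongr; linarith
          _ ≤ _ := hT
    have hb : |e.im * t| < π / 2 := by
      rcases hb with h | h
      · exact h
      · rw [h]; simp; positivity
    obtain ⟨hb1, hb2⟩ := abs_lt.1 hb
    have hcos : 0 < Real.cos (e.im * t) := Real.cos_pos_of_mem_Ioo ⟨hb1, hb2⟩
    rw [hre, him]
    refine ⟨mul_nonneg (Real.sinh_nonneg_iff.2 (by positivity)) hcos.le, fun h => ?_, fun h => ?_,
      fun h => ?_, fun h => ?_, fun h => ?_⟩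
    · exact mul_pos (Real.sinh_pos_iff.2 (by positivity)) hcos
    · simp [h]
    · exact mul_pos (Real.cosh_pos _) (Real.sin_pos_of_pos_of_lt_pi (by positivity)
        (by linarith [Real.pi_pos]))
    · exact mul_neg_of_pos_of_neg (Real.cosh_pos _) (Real.sin_neg_of_neg_of_neg_pi_lt
        (mul_neg_of_neg_of_pos h ht) (by linarith [Real.pi_pos]))
    · simp [h]
  have Hc := hRe0 c hc1 (by linarith [abs_nonneg d.im])
  have Hd := hRe0 d hd1 (by linarith [abs_nonneg c.im])
  have hcne : 0 < c.re ∨ (c.re = 0 ∧ c.im ≠ 0) := by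
    rcases hc1.lt_or_eq with h | h
    · exact Or.inl h
    · refine Or.inr ⟨h.symm, fun h' => hc (Complex.ext h.symm h')⟩
  have hdne : 0 < d.re ∨ (d.re = 0 ∧ d.im ≠ 0) := by
    rcases hd1.lt_or_eq with h | h
    · exact Or.inl h
    · refine Or.inr ⟨h.symm, fun h' => hd (Complex.ext h.symm h')⟩
  suffices H : ∃ x y : ℝ, ∀ A B : ℂ,
      (0 ≤ A.re ∧ (0 < c.re → 0 < A.re) ∧ (c.re = 0 → A.re = 0) ∧
      (0 < c.im → 0 < A.im) ∧ (c.im < 0 → A.im < 0) ∧ (c.im = 0 → A.im = 0)) →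
      (0 ≤ B.re ∧ (0 < d.re → 0 < B.re) ∧ (d.re = 0 → B.re = 0) ∧
      (0 < d.im → 0 < B.im) ∧ (d.im < 0 → B.im < 0) ∧ (d.im = 0 → B.im = 0)) →
      0 < x * (A.re * B.re - A.im * B.im) - y * (A.re * B.im + A.im * B.re) by
    obtain ⟨x, y, H⟩ := H
    refine ⟨⟨x, y⟩, fun t ht htT => ?_⟩
    have := H _ _ (Hc t ht htT) (Hd t ht htT)
    simpa [Complex.mul_re, Complex.mul_im] using this
  clear Hc Hd hRe0 hre him hT hc1 hd1 hc hd
  rcases hcne with h1 | ⟨h1, h1'⟩ <;> rcases hdne with h2 | ⟨h2, h2'⟩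
  · rcases lt_trichotomy c.im 0 with h3 | h3 | h3 <;> rcases lt_trichotomy d.im 0 with h4 | h4 | h4
    · refine ⟨0, 1, fun A B ⟨a1, a2, a3, a4, a5, a6⟩ ⟨b1, b2, b3, b4, b5, b6⟩ => ?_⟩
      nlinarith [mul_pos (a2 h1) (neg_pos.2 (b5 h4)), mul_pos (neg_pos.2 (a5 h3)) (b2 h2)]
    · refine ⟨1, 0, fun A B ⟨a1, a2, a3, a4, a5, a6⟩ ⟨b1, b2, b3, b4, b5, b6⟩ => ?_⟩
      rw [b6 h4]; nlinarith [mul_pos (a2 h1) (b2 h2)]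
    · refine ⟨1, 0, fun A B ⟨a1, a2, a3, a4, a5, a6⟩ ⟨b1, b2, b3, b4, b5, b6⟩ => ?_⟩
      nlinarith [mul_pos (a2 h1) (b2 h2), mul_pos (neg_pos.2 (a5 h3)) (b4 h4)]
    · refine ⟨1, 0, fun A B ⟨a1, a2, a3, a4, a5, a6⟩ ⟨b1, b2, b3, b4, b5, b6⟩ => ?_⟩
      rw [a6 h3]; nlinarith [mul_pos (a2 h1) (b2 h2)]
    · refine ⟨1, 0, fun A B ⟨a1, a2, a3, a4, a5, a6⟩ ⟨b1, b2, b3, b4, b5, b6⟩ => ?_⟩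
      rw [a6 h3]; nlinarith [mul_pos (a2 h1) (b2 h2)]
    · refine ⟨1, 0, fun A B ⟨a1, a2, a3, a4, a5, a6⟩ ⟨b1, b2, b3, b4, b5, b6⟩ => ?_⟩
      rw [a6 h3]; nlinarith [mul_pos (a2 h1) (b2 h2)]
    · refine ⟨1, 0, fun A B ⟨a1, a2, a3, a4, a5, a6⟩ ⟨b1, b2, b3, b4, b5, b6⟩ => ?_⟩
      nlinarith [mul_pos (a2 h1) (b2 h2), mul_pos (a4 h3) (neg_pos.2 (b5 h4))]
    · refine ⟨1, 0, fun A B ⟨a1, a2, a3, a4, a5, a6⟩ ⟨b1, b2, b3, b4, b5, b6⟩ => ?_⟩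
      rw [b6 h4]; nlinarith [mul_pos (a2 h1) (b2 h2)]
    · refine ⟨0, -1, fun A B ⟨a1, a2, a3, a4, a5, a6⟩ ⟨b1, b2, b3, b4, b5, b6⟩ => ?_⟩
      nlinarith [mul_pos (a2 h1) (b4 h4), mul_pos (a4 h3) (b2 h2)]
  · -- B purely imaginary
    rcases lt_or_gt_of_ne h2' with h4 | h4
    · refine ⟨0, 1, fun A B ⟨a1, a2, a3, a4, a5, a6⟩ ⟨b1, b2, b3, b4, b5, b6⟩ => ?_⟩
      rw [b3 h2]; nlinarith [mul_pos (a2 h1) (neg_pos.2 (b5 h4))]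
    · refine ⟨0, -1, fun A B ⟨a1, a2, a3, a4, a5, a6⟩ ⟨b1, b2, b3, b4, b5, b6⟩ => ?_⟩
      rw [b3 h2]; nlinarith [mul_pos (a2 h1) (b4 h4)]
  · rcases lt_or_gt_of_ne h1' with h4 | h4
    · refine ⟨0, 1, fun A B ⟨a1, a2, a3, a4, a5, a6⟩ ⟨b1, b2, b3, b4, b5, b6⟩ => ?_⟩
      rw [a3 h1]; nlinarith [mul_pos (b2 h2) (neg_pos.2 (a5 h4))]
    · refine ⟨0, -1, fun A B ⟨a1, a2, a3, a4, a5, a6⟩ ⟨b1, b2, b3, b4, b5, b6⟩ => ?_⟩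
      rw [a3 h1]; nlinarith [mul_pos (b2 h2) (a4 h4)]
  · rcases lt_or_gt_of_ne h1' with h3 | h3 <;> rcases lt_or_gt_of_ne h2' with h4 | h4
    · refine ⟨-1, 0, fun A B ⟨a1, a2, a3, a4, a5, a6⟩ ⟨b1, b2, b3, b4, b5, b6⟩ => ?_⟩
      rw [a3 h1, b3 h2]; nlinarith [mul_pos (neg_pos.2 (a5 h3)) (neg_pos.2 (b5 h4))]
    · refine ⟨1, 0, fun A B ⟨a1, a2, a3, a4, a5, a6⟩ ⟨b1, b2, b3, b4, b5, b6⟩ => ?_⟩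
      rw [a3 h1, b3 h2]; nlinarith [mul_pos (neg_pos.2 (a5 h3)) (b4 h4)]
    · refine ⟨1, 0, fun A B ⟨a1, a2, a3, a4, a5, a6⟩ ⟨b1, b2, b3, b4, b5, b6⟩ => ?_⟩
      rw [a3 h1, b3 h2]; nlinarith [mul_pos (a4 h3) (neg_pos.2 (b5 h4))]
    · refine ⟨-1, 0, fun A B ⟨a1, a2, a3, a4, a5, a6⟩ ⟨b1, b2, b3, b4, b5, b6⟩ => ?_⟩
      rw [a3 h1, b3 h2]; nlinarith [mul_pos (a4 h3) (b4 h4)]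

lemma core_left {c d : ℂ} (hc : c ≠ 0) (hd : d ≠ 0) (hc1 : 0 ≤ c.re)
    {T : ℝ} (hT : (|c.im| + |d.im|) * T ≤ π / 2) :
    ∃ z : ℂ, ∀ t : ℝ, 0 < t → t < T →
      0 < (z * (Complex.sinh (c * t) * Complex.sinh (d * t))).re := by
  by_cases h : 0 ≤ d.re
  · exact core_pos hc hd hc1 h hT
  · obtain ⟨z, hz⟩ := core_pos (d := -d) hc (neg_ne_zero.2 hd) hc1
      (by simp; linarith) (by simpa using hT)
    refine ⟨-z, fun t h1 h2 => ?_⟩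
    have := hz t h1 h2
    rw [neg_mul d, Complex.sinh_neg] at this
    convert this using 2
    ring

lemma core {c d : ℂ} (hc : c ≠ 0) (hd : d ≠ 0)
    {T : ℝ} (hT : (|c.im| + |d.im|) * T ≤ π / 2) :
    ∃ z : ℂ, ∀ t : ℝ, 0 < t → t < T →
      0 < (z * (Complex.sinh (c * t) * Complex.sinh (d * t))).re := by
  by_cases h : 0 ≤ c.re
  · exact core_left hc hd h hT
  · obtain ⟨z, hz⟩ := core_left (c := -c) (neg_ne_zero.2 hc) hd
      (by simp; linarith) (by simpa using hT)
    refine ⟨-z, fun t h1 h2 => ?_⟩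
    have := hz t h1 h2
    rw [neg_mul c, Complex.sinh_neg] at this
    convert this using 2
    ring

/-- sign lemma for the difference of two hyperbolic cosines -/
lemma cosh_diff {a b : ℂ} (hab : a ^ 2 ≠ b ^ 2) {T : ℝ}
    (hT : (max |a.im| |b.im|) * T ≤ π / 2) :
    ∃ z : ℂ, ∀ t : ℝ, t ≠ 0 → |t| < T →
      0 < (z * (Complex.cosh (a * t) - Complex.cosh (b * t))).re := by
  have hc : (a + b) / 2 ≠ 0 := fun h => hab (by
    have : a + b = 0 := by simpa using h
    linear_combination (a - b) * this)
  have hd : (a - b) / 2 ≠ 0 := fun h => hab (by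
    have : a - b = 0 := by simpa using h
    linear_combination (a + b) * this)
  have hi : |((a + b) / 2).im| + |((a - b) / 2).im| = max |a.im| |b.im| := by
    have h1 : ((a + b) / 2).im = (a.im + b.im) / 2 := by
      simp
    have h2 : ((a - b) / 2).im = (a.im - b.im) / 2 := by
      simp
    rw [h1, h2]
    rcases abs_cases a.im with h | h <;> rcases abs_cases b.im with h' | h' <;>
    rcases abs_cases ((a.im + b.im)/2) with h3 | h3 <;>
    rcases abs_cases ((a.im - b.im)/2) with h4 | h4 <;>
    rcases max_cases |a.im| |b.im| with h5 | h5 <;> linarith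
  obtain ⟨z, hz⟩ := core hc hd (T := T) (by rw [hi]; exact hT)
  have hpos : ∀ t : ℝ, 0 < t → t < T →
      0 < (z / 2 * (Complex.cosh (a * t) - Complex.cosh (b * t))).re := by
    intro t h1 h2
    have h3 := hz t h1 h2
    have e1 : a * t = (a + b) / 2 * t + (a - b) / 2 * t := by ring
    have e2 : b * t = (a + b) / 2 * t - (a - b) / 2 * t := by ring
    rw [e1, e2, Complex.cosh_add, Complex.cosh_sub]
    convert h3 using 2
    ring
  refine ⟨z / 2, fun t h1 h2 => ?_⟩
  rcases lt_or_gt_of_ne h1 with h | h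
  · have := hpos (-t) (by linarith) (by rwa [abs_of_neg h] at h2)
    simpa [Complex.cosh_neg] using this
  · exact hpos t h (by rwa [abs_of_pos h] at h2)


lemma param_deriv (F F' : ℝ → ℝ → ℂ) (hF : Continuous (Function.uncurry F))
    (hF' : Continuous (Function.uncurry F'))
    (hd : ∀ x t, HasDerivAt (fun x => F x t) (F' x t) x) (x₀ : ℝ) :
    HasDerivAt (fun x => ∫ t in (0:ℝ)..π, F x t) (∫ t in (0:ℝ)..π, F' x₀ t) x₀ := by
  obtain ⟨M, hM⟩ := ((isCompact_closedBall x₀ 1).prod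
    (isCompact_Icc (a := (0:ℝ)) (b := π))).exists_bound_of_continuousOn hF'.continuousOn
  have hFc : ∀ x, Continuous (F x) := fun x => hF.comp (by fun_prop : Continuous fun t => (x, t))
  have hFc' : ∀ x, Continuous (F' x) := fun x => hF'.comp (by fun_prop : Continuous fun t => (x, t))
  refine (intervalIntegral.hasDerivAt_integral_of_dominated_loc_of_deriv_le
    (bound := fun _ => M) (Metric.ball_mem_nhds x₀ one_pos)
    (Filter.Eventually.of_forall fun x => (hFc x).aestronglyMeasurable)
    ((hFc x₀).intervalIntegrable _ _) (hFc' x₀).aestronglyMeasurable ?_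
    intervalIntegrable_const ?_).2
  · refine Filter.Eventually.of_forall fun t ht x hx => ?_
    rw [Set.uIoc_of_le pi_pos.le] at ht
    exact hM (x, t) ⟨Metric.ball_subset_closedBall hx, ht.1.le, ht.2⟩
  · exact Filter.Eventually.of_forall fun t _ x _ => hd x t

noncomputable def U (r θ : ℝ) : ℝ := Real.cosh r + Real.sinh r * Real.cos θ
noncomputable def V (r θ : ℝ) : ℝ := Real.sinh r + Real.cosh r * Real.cos θ

lemma U_bounds (r θ : ℝ) : Real.exp (-|r|) ≤ U r θ ∧ U r θ ≤ Real.exp |r| := by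
  have h1 := Real.cos_le_one θ
  have h2 := Real.neg_one_le_cos θ
  unfold U
  rw [← Real.cosh_abs r, ← Real.cosh_sub_sinh, ← Real.cosh_add_sinh]
  have h3 : |Real.sinh r * Real.cos θ| ≤ Real.sinh |r| := by
    rw [abs_mul, Real.abs_sinh]
    exact mul_le_of_le_one_right (Real.sinh_nonneg_iff.2 (abs_nonneg r)) (Real.abs_cos_le_one θ)
  obtain ⟨h4, h5⟩ := abs_le.1 h3
  constructor <;> linarith

lemma U_pos (r θ : ℝ) : 0 < U r θ := (Real.exp_pos _).trans_le (U_bounds r θ).1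

lemma U_cont : Continuous (Function.uncurry U) := by
  unfold U Function.uncurry; fun_prop

lemma V_cont : Continuous (Function.uncurry V) := by
  unfold V Function.uncurry; fun_prop

noncomputable def G (α : ℂ) (r θ : ℝ) : ℂ := Complex.exp (-α * (Real.log (U r θ) : ℝ))

lemma G_cont (α : ℂ) : Continuous (Function.uncurry (G α)) := by
  have h : Continuous (fun x : ℝ × ℝ => Real.log (U x.1 x.2)) :=
    U_cont.log (fun x => (U_pos x.1 x.2).ne')
  unfold G Function.uncurry
  fun_prop

lemma U_deriv (r θ : ℝ) : HasDerivAt (fun r => U r θ) (V r θ) r := by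
  unfold U V
  exact (Real.hasDerivAt_cosh r).add ((Real.hasDerivAt_sinh r).mul_const _)

lemma V_deriv (r θ : ℝ) : HasDerivAt (fun r => V r θ) (U r θ) r := by
  unfold U V
  exact (Real.hasDerivAt_sinh r).add ((Real.hasDerivAt_cosh r).mul_const _)

lemma G_deriv (α : ℂ) (r θ : ℝ) :
    HasDerivAt (fun r => G α r θ) (-α * (G α r θ * ((V r θ / U r θ : ℝ) : ℂ))) r := by
  have h := ((((U_deriv r θ).log (U_pos r θ).ne').ofReal_comp).const_mul (-α)).cexp
  refine h.congr_deriv ?_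
  simp only [G]; ring

lemma G_deriv_theta (α : ℂ) (r θ : ℝ) :
    HasDerivAt (fun θ => G α r θ)
      (-α * (G α r θ * ((-(Real.sinh r * Real.sin θ) / U r θ : ℝ) : ℂ))) θ := by
  have hU : HasDerivAt (fun θ => U r θ) (-(Real.sinh r * Real.sin θ)) θ := by
    unfold U
    refine (((Real.hasDerivAt_cos θ).const_mul (Real.sinh r)).const_add (Real.cosh r)).congr_deriv ?_
    ring
  have h := (((hU.log (U_pos r θ).ne').ofReal_comp).const_mul (-α)).cexp
  refine h.congr_deriv ?_
  simp only [G]; ring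

noncomputable def F0 (m : ℕ) (α : ℂ) (r θ : ℝ) : ℂ := ((Real.sin θ ^ m : ℝ) : ℂ) * G α r θ
noncomputable def F1 (m : ℕ) (α : ℂ) (r θ : ℝ) : ℂ :=
  ((Real.sin θ ^ m : ℝ) : ℂ) * (-α * (G α r θ * ((V r θ / U r θ : ℝ) : ℂ)))
noncomputable def F2 (m : ℕ) (α : ℂ) (r θ : ℝ) : ℂ :=
  ((Real.sin θ ^ m : ℝ) : ℂ) * (-α * ((-α * (G α r θ * ((V r θ / U r θ : ℝ) : ℂ))) *
    ((V r θ / U r θ : ℝ) : ℂ) + G α r θ *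
      (((U r θ * U r θ - V r θ * V r θ) / U r θ ^ 2 : ℝ) : ℂ)))

lemma VU_cont : Continuous (fun x : ℝ × ℝ => V x.1 x.2 / U x.1 x.2) :=
  V_cont.div₀ U_cont (fun x => (U_pos x.1 x.2).ne')

lemma F0_cont (m α) : Continuous (Function.uncurry (F0 m α)) := by
  have h := G_cont α
  unfold Function.uncurry at h
  unfold F0 Function.uncurry
  fun_prop

lemma F1_cont (m α) : Continuous (Function.uncurry (F1 m α)) := by
  have h := G_cont α
  have h2 := VU_cont
  unfold Function.uncurry at h
  unfold F1 Function.uncurry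
  fun_prop

lemma F2_cont (m α) : Continuous (Function.uncurry (F2 m α)) := by
  have h := G_cont α
  have h2 := VU_cont
  have h3 : Continuous (fun x : ℝ × ℝ => (U x.1 x.2 * U x.1 x.2 - V x.1 x.2 * V x.1 x.2)
      / U x.1 x.2 ^ 2) :=
    ((U_cont.mul U_cont).sub (V_cont.mul V_cont)).div₀ (U_cont.pow 2)
      (fun x => (pow_pos (U_pos x.1 x.2) 2).ne')
  unfold Function.uncurry at h
  unfold F2 Function.uncurry
  fun_prop

lemma F0_deriv (m α) (r θ : ℝ) : HasDerivAt (fun r => F0 m α r θ) (F1 m α r θ) r :=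
  (G_deriv α r θ).const_mul _

lemma F1_deriv (m α) (r θ : ℝ) : HasDerivAt (fun r => F1 m α r θ) (F2 m α r θ) r :=
  (((G_deriv α r θ).mul
    (((V_deriv r θ).div (U_deriv r θ) (U_pos r θ).ne').ofReal_comp)).const_mul (-α)).const_mul _

noncomputable def I0 (m : ℕ) (α : ℂ) (r : ℝ) : ℂ := ∫ θ in (0:ℝ)..π, F0 m α r θ
noncomputable def I1 (m : ℕ) (α : ℂ) (r : ℝ) : ℂ := ∫ θ in (0:ℝ)..π, F1 m α r θ
noncomputable def I2 (m : ℕ) (α : ℂ) (r : ℝ) : ℂ := ∫ θ in (0:ℝ)..π, F2 m α r θ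

lemma I0_deriv (m α) (r : ℝ) : HasDerivAt (I0 m α) (I1 m α r) r :=
  param_deriv _ _ (F0_cont m α) (F1_cont m α) (F0_deriv m α) r
lemma I1_deriv (m α) (r : ℝ) : HasDerivAt (I1 m α) (I2 m α r) r :=
  param_deriv _ _ (F1_cont m α) (F2_cont m α) (F1_deriv m α) r

lemma cont_snd {F : ℝ → ℝ → ℂ} (h : Continuous (Function.uncurry F)) (r : ℝ) :
    Continuous (F r) := h.comp (by fun_prop : Continuous fun t => (r, t))

lemma I_ode (m : ℕ) (α : ℂ) (r : ℝ) (hr : 0 < r) :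
    I2 m α r = -(((m + 1 : ℕ) : ℂ) * ((Real.cosh r / Real.sinh r : ℝ) : ℂ)) * I1 m α r
      - (α * ((m + 1 : ℕ) : ℂ) - α ^ 2) * I0 m α r := by
  have hs : (0:ℝ) < Real.sinh r := Real.sinh_pos_iff.2 hr
  have hsC : ((Real.sinh r : ℝ) : ℂ) ≠ 0 := by exact_mod_cast hs.ne'
  let A : ℝ → ℂ := fun θ => F2 m α r θ
    + (((m + 1 : ℕ) : ℂ) * ((Real.cosh r / Real.sinh r : ℝ) : ℂ)) * F1 m α r θ
    + (α * ((m + 1 : ℕ) : ℂ) - α ^ 2) * F0 m α r θ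
  have hA : Continuous A := by
    have h0 := cont_snd (F0_cont m α) r
    have h1 := cont_snd (F1_cont m α) r
    have h2 := cont_snd (F2_cont m α) r
    fun_prop
  have hint : ∫ θ in (0:ℝ)..π, A θ = 0 := by
    let H : ℝ → ℂ := fun θ => (-α / ((Real.sinh r : ℝ) : ℂ)) *
      (G α r θ * ((Real.sin θ ^ (m + 1) / U r θ : ℝ) : ℂ))
    have hH : ∀ θ ∈ Set.uIcc 0 π, HasDerivAt H (A θ) θ := by
      intro θ _
      have hU : HasDerivAt (fun θ => U r θ) (-(Real.sinh r * Real.sin θ)) θ := by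
        unfold U
        refine (((Real.hasDerivAt_cos θ).const_mul
          (Real.sinh r)).const_add (Real.cosh r)).congr_deriv ?_
        ring
      have h1 := ((G_deriv_theta α r θ).mul
        (((((Real.hasDerivAt_sin θ).pow (m + 1)).div hU
          (U_pos r θ).ne')).ofReal_comp)).const_mul (-α / ((Real.sinh r : ℝ) : ℂ))
      refine h1.congr_deriv ?_
      have hUne : ((U r θ : ℝ) : ℂ) ≠ 0 := by exact_mod_cast (U_pos r θ).ne'
      simp only [A, F0, F1, F2, Pi.pow_apply, Pi.div_apply, Nat.add_sub_cancel]
      have e1 : ((V r θ : ℝ) : ℂ) = (Real.sinh r : ℝ) + (Real.cosh r : ℝ) * (Real.cos θ : ℝ) := by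
        unfold V; push_cast; ring
      have e0 : ((U r θ : ℝ) : ℂ) = (Real.cosh r : ℝ) + (Real.sinh r : ℝ) * (Real.cos θ : ℝ) := by
        unfold U; push_cast; ring
      have e2 : ((Real.sin θ : ℝ) : ℂ) ^ 2 = 1 - ((Real.cos θ : ℝ) : ℂ) ^ 2 := by
        rw [eq_sub_iff_add_eq]; exact_mod_cast Real.sin_sq_add_cos_sq θ
      have e3 : ((Real.cosh r : ℝ) : ℂ) ^ 2 = 1 + ((Real.sinh r : ℝ) : ℂ) ^ 2 := by
        rw [add_comm]; exact_mod_cast Real.cosh_sq r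
      simp only [Complex.ofReal_mul, Complex.ofReal_div, Complex.ofReal_sub, Complex.ofReal_pow,
        Complex.ofReal_neg, Complex.ofReal_add, Complex.ofReal_natCast, Nat.cast_add, Nat.cast_one,
        Complex.ofReal_one]
      generalize ((Real.sin θ : ℝ) : ℂ) = s at *
      generalize ((Real.cos θ : ℝ) : ℂ) = c at *
      generalize ((Real.sinh r : ℝ) : ℂ) = S at *
      generalize ((Real.cosh r : ℝ) : ℂ) = Ch at *
      generalize ((V r θ : ℝ) : ℂ) = v at *
      generalize ((U r θ : ℝ) : ℂ) = u at *
      generalize G α r θ = g at *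
      have e4 : u ^ 2 - v ^ 2 = s ^ 2 := by
        rw [e0, e1, e2]; linear_combination (1 - c ^ 2) * e3
      have e5 : S * u - Ch * v = - c := by
        rw [e0, e1]; linear_combination (-c) * e3
      field_simp
      linear_combination (α * g * s ^ m) * ((α + 1) * S * e4 - u * (m + 1) * e5)
    rw [intervalIntegral.integral_eq_sub_of_hasDerivAt hH (hA.intervalIntegrable _ _)]
    simp [H]
  have i0 := (cont_snd (F0_cont m α) r).intervalIntegrable (μ := volume) 0 π
  have i1 := (cont_snd (F1_cont m α) r).intervalIntegrable (μ := volume) 0 π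
  have i2 := (cont_snd (F2_cont m α) r).intervalIntegrable (μ := volume) 0 π
  simp only [A] at hint
  rw [intervalIntegral.integral_add (i2.add (i1.const_mul _)) (i0.const_mul _),
    intervalIntegral.integral_add i2 (i1.const_mul _), intervalIntegral.integral_const_mul,
    intervalIntegral.integral_const_mul] at hint
  unfold I0 I1 I2
  linear_combination hint


noncomputable def N (m : ℕ) : ℝ := ∫ θ in (0:ℝ)..π, Real.sin θ ^ m

lemma N_pos (m : ℕ) : 0 < N m := by
  refine intervalIntegral.intervalIntegral_pos_of_pos_on ?_ ?_ pi_pos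
  · exact (by fun_prop : Continuous fun θ => Real.sin θ ^ m).intervalIntegrable _ _
  · exact fun x hx => pow_pos (Real.sin_pos_of_mem_Ioo hx) m

lemma I0_zero (m : ℕ) (α : ℂ) : I0 m α 0 = (N m : ℂ) := by
  unfold I0 F0 G U N
  simp [← intervalIntegral.integral_ofReal]

lemma sol_I (m : ℕ) (α : ℂ) : Sol (m + 1) (α * ((m + 1 : ℕ) : ℂ) - α ^ 2)
    (fun r => I0 m α r / (N m : ℂ)) (fun r => I1 m α r / (N m : ℂ)) where
  cont := fun r _ => ((I0_deriv m α r).div_const _).continuousAt.continuousWithinAt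
  zero := by
    have : (N m : ℂ) ≠ 0 := by exact_mod_cast (N_pos m).ne'
    rw [I0_zero, div_self this]
  d1 := fun r _ => (I0_deriv m α r).div_const _
  d2 := fun r hr => by
    refine ((I1_deriv m α r).div_const _).congr_deriv ?_
    rw [I_ode m α r hr]
    ring

lemma log_U_bound {s θ : ℝ} (hs : 0 < s) (hθ : θ ∈ Set.Ioo 0 π) : |Real.log (U s θ)| < s := by
  have hsh : (0:ℝ) < Real.sinh s := Real.sinh_pos_iff.2 hs
  have h1 : Real.cos θ < 1 := by
    have := Real.cos_lt_cos_of_nonneg_of_le_pi le_rfl hθ.2.le hθ.1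
    simpa using this
  have h2 : -1 < Real.cos θ := by
    have := Real.cos_lt_cos_of_nonneg_of_le_pi hθ.1.le le_rfl hθ.2
    simpa using this
  rw [abs_lt]
  constructor
  · rw [Real.lt_log_iff_exp_lt (U_pos s θ), ← Real.cosh_sub_sinh]
    unfold U; nlinarith
  · rw [Real.log_lt_iff_lt_exp (U_pos s θ), ← Real.cosh_add_sinh]
    unfold U; nlinarith

lemma F_comb (m : ℕ) (α : ℂ) (s θ : ℝ) :
    F0 m α s θ + F0 m (((m + 1 : ℕ) : ℂ) - α) s θ =
      ((Real.sin θ ^ m * Real.exp (-((m + 1 : ℕ) : ℝ) / 2 * Real.log (U s θ)) * 2 : ℝ) : ℂ) *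
        Complex.cosh ((α - ((m + 1 : ℕ) : ℂ) / 2) * (Real.log (U s θ) : ℝ)) := by
  unfold F0 G
  generalize Real.log (U s θ) = t
  have e1 : -α * (t : ℂ) = (((-((m + 1 : ℕ) : ℝ) / 2 * t : ℝ)) : ℂ) +
      -((α - ((m + 1 : ℕ) : ℂ) / 2) * t) := by push_cast; ring
  have e2 : -(((m + 1 : ℕ) : ℂ) - α) * (t : ℂ) = (((-((m + 1 : ℕ) : ℝ) / 2 * t : ℝ)) : ℂ) +
      ((α - ((m + 1 : ℕ) : ℂ) / 2) * t) := by push_cast; ring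
  rw [e1, e2, Complex.exp_add, Complex.exp_add, Complex.cosh, ← Complex.ofReal_exp]
  simp only [Complex.ofReal_mul, Complex.ofReal_ofNat]
  ring

lemma I_ne (m : ℕ) (α β : ℂ)
    (hne : α * ((m + 1 : ℕ) : ℂ) - α ^ 2 ≠ β * ((m + 1 : ℕ) : ℂ) - β ^ 2)
    (s : ℝ) (hs : 0 < s) (hT : max |α.im| |β.im| * s ≤ π / 2) :
    I0 m α s + I0 m (((m + 1 : ℕ) : ℂ) - α) s ≠ I0 m β s + I0 m (((m + 1 : ℕ) : ℂ) - β) s := by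
  intro heq
  let a : ℂ := α - ((m + 1 : ℕ) : ℂ) / 2
  let b : ℂ := β - ((m + 1 : ℕ) : ℂ) / 2
  have hab : a ^ 2 ≠ b ^ 2 := fun h => hne (by simp only [a, b] at h; linear_combination -h)
  have hk : (((m + 1 : ℕ) : ℂ) / 2).im = 0 := by
    have : ((m + 1 : ℕ) : ℂ) / 2 = ((((m + 1 : ℕ) : ℝ) / 2 : ℝ) : ℂ) := by push_cast; ring
    rw [this, Complex.ofReal_im]
  have ha : a.im = α.im := by simp only [a, Complex.sub_im, hk, sub_zero]
  have hb : b.im = β.im := by simp only [b, Complex.sub_im, hk, sub_zero]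
  obtain ⟨z, hz⟩ := cosh_diff hab (T := s) (by rw [ha, hb]; exact hT)
  let D : ℝ → ℂ := fun θ => z * ((F0 m α s θ + F0 m (((m + 1 : ℕ) : ℂ) - α) s θ) -
    (F0 m β s θ + F0 m (((m + 1 : ℕ) : ℂ) - β) s θ))
  have c1 := cont_snd (F0_cont m α) s
  have c2 := cont_snd (F0_cont m (((m + 1 : ℕ) : ℂ) - α)) s
  have c3 := cont_snd (F0_cont m β) s
  have c4 := cont_snd (F0_cont m (((m + 1 : ℕ) : ℂ) - β)) s
  have hDc : Continuous D := by fun_prop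
  have hD0 : ∫ θ in (0:ℝ)..π, D θ = 0 := by
    simp only [D]
    have i1 := c1.intervalIntegrable (μ := volume) 0 π
    have i2 := c2.intervalIntegrable (μ := volume) 0 π
    have i3 := c3.intervalIntegrable (μ := volume) 0 π
    have i4 := c4.intervalIntegrable (μ := volume) 0 π
    rw [intervalIntegral.integral_const_mul, intervalIntegral.integral_sub (i1.add i2) (i3.add i4),
      intervalIntegral.integral_add i1 i2, intervalIntegral.integral_add i3 i4]
    unfold I0 at heq
    rw [heq, sub_self, mul_zero]
  have hre : ∫ θ in (0:ℝ)..π, (D θ).re = 0 := by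
    have := Complex.reCLM.intervalIntegral_comp_comm (hDc.intervalIntegrable (μ := volume) 0 π)
    rw [hD0] at this
    simpa using this
  have hDre : ∀ θ, (D θ).re =
      (Real.sin θ ^ m * Real.exp (-((m + 1 : ℕ) : ℝ) / 2 * Real.log (U s θ)) * 2) *
      (z * (Complex.cosh (a * (Real.log (U s θ) : ℝ)) -
        Complex.cosh (b * (Real.log (U s θ) : ℝ)))).re := by
    intro θ
    simp only [D]
    rw [F_comb, F_comb, ← Complex.re_ofReal_mul]
    congr 1
    ring
  have hpos : ∀ θ ∈ Set.Ioo 0 π, Real.log (U s θ) ≠ 0 → 0 < (D θ).re := by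
    intro θ hθ h0
    rw [hDre]
    refine mul_pos ?_ (hz _ h0 (log_U_bound hs hθ))
    have := pow_pos (Real.sin_pos_of_mem_Ioo hθ) m
    positivity
  have hnn : ∀ θ ∈ Set.Ioo 0 π, 0 ≤ (D θ).re := by
    intro θ hθ
    by_cases h0 : Real.log (U s θ) = 0
    · rw [hDre, h0]; simp
    · exact (hpos θ hθ h0).le
  have hDrc : Continuous fun θ => (D θ).re := Complex.continuous_re.comp hDc
  have hnn' : ∀ θ ∈ Set.Icc 0 π, 0 ≤ (D θ).re := by
    have hcl : IsClosed {θ | 0 ≤ (D θ).re} := isClosed_le continuous_const hDrc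
    have := closure_minimal (s := Set.Ioo 0 π) hnn hcl
    rw [closure_Ioo pi_pos.ne] at this
    exact this
  have hfin : 0 < ∫ θ in (0:ℝ)..π, (D θ).re := by
    refine intervalIntegral.integral_pos pi_pos hDrc.continuousOn
      (fun θ hθ => hnn' θ ⟨hθ.1.le, hθ.2⟩) ⟨π / 2, ⟨by positivity, by linarith [pi_pos]⟩, ?_⟩
    refine hpos _ ⟨by positivity, by linarith [pi_pos]⟩ ?_
    have : U s (π / 2) = Real.cosh s := by unfold U; simp
    rw [this]
    exact (Real.log_pos (Real.one_lt_cosh.2 hs.ne')).ne'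
  linarith

lemma sol_scale {ρ : ℝ} (hρ : 0 < ρ) {k : ℕ} {μ l : ℂ} (hl : μ = l / (ρ : ℂ) ^ 2) {φ : ℝ → ℂ}
    (hc : ContinuousOn φ (Set.Ici 0)) (h0 : φ 0 = 1)
    (hd : ∀ r : ℝ, 0 < r → DifferentiableAt ℝ φ r ∧ DifferentiableAt ℝ (deriv φ) r)
    (heq : ∀ r : ℝ, 0 < r →
      deriv (deriv φ) r
        + (((k : ℝ) / ρ) * (Real.cosh (r / ρ) / Real.sinh (r / ρ)) : ℝ) * deriv φ r
        + μ * φ r = 0) :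
    Sol k l (fun s => φ (ρ * s)) (fun s => (ρ : ℂ) * deriv φ (ρ * s)) := by
  have hρC : (ρ : ℂ) ≠ 0 := by exact_mod_cast hρ.ne'
  have hin : ∀ r : ℝ, HasDerivAt (fun s : ℝ => ρ * s) ρ r := fun r => by
    simpa using (hasDerivAt_id r).const_mul ρ
  refine ⟨?_, by simpa using h0, ?_, ?_⟩
  · refine hc.comp (by fun_prop) ?_
    intro s hs
    exact mul_nonneg hρ.le hs
  · intro r hr
    have := (hd (ρ * r) (by positivity)).1.hasDerivAt.scomp r (hin r)
    exact this.congr_deriv (Complex.real_smul)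
  · intro r hr
    have h1 := ((hd (ρ * r) (by positivity)).2.hasDerivAt.scomp r (hin r)).const_mul (ρ : ℂ)
    refine h1.congr_deriv ?_
    have h2 := heq (ρ * r) (by positivity)
    rw [mul_div_cancel_left₀ r hρ.ne', hl] at h2
    rw [Complex.real_smul]
    generalize Real.cosh r / Real.sinh r = q at *
    have h3 : deriv (deriv φ) (ρ * r) = -(((k : ℝ) / ρ * q : ℝ) : ℂ) * deriv φ (ρ * r)
        - l / (ρ : ℂ) ^ 2 * φ (ρ * r) := by linear_combination h2
    rw [h3]
    push_cast
    field_simp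

end OneRadius

/-- One Radius Theorem: two distinct-eigenvalue normalized radial eigenfunctions of the
hyperbolic Laplacian (value `1` at the origin) cannot agree at any radius
`r ∈ (0, πρ/(2p)]`, where `p = max (|Im α|, |Im β|) > 0` and `μ = (αk − α²)/ρ²`,
`ν = (βk − β²)/ρ²`. -/
theorem one_radius_theorem
    (ρ : ℝ) (hρ : 0 < ρ) (k : ℕ) (hk : 1 ≤ k)
    (μ ν α β : ℂ) (hμν : μ ≠ ν)
    (hμα : μ = (α * k - α ^ 2) / (ρ : ℂ) ^ 2)
    (hνβ : ν = (β * k - β ^ 2) / (ρ : ℂ) ^ 2)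
    (p : ℝ) (hp : p = max |α.im| |β.im|) (hp0 : 0 < p)
    (φμ φν : ℝ → ℂ)
    (hcμ : ContinuousOn φμ (Set.Ici 0)) (h0μ : φμ 0 = 1)
    (hdμ : ∀ r : ℝ, 0 < r → DifferentiableAt ℝ φμ r ∧ DifferentiableAt ℝ (deriv φμ) r)
    (heqμ : ∀ r : ℝ, 0 < r →
      deriv (deriv φμ) r
        + (((k : ℝ) / ρ) * (Real.cosh (r / ρ) / Real.sinh (r / ρ)) : ℝ) * deriv φμ r
        + μ * φμ r = 0)
    (hcν : ContinuousOn φν (Set.Ici 0)) (h0ν : φν 0 = 1)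
    (hdν : ∀ r : ℝ, 0 < r → DifferentiableAt ℝ φν r ∧ DifferentiableAt ℝ (deriv φν) r)
    (heqν : ∀ r : ℝ, 0 < r →
      deriv (deriv φν) r
        + (((k : ℝ) / ρ) * (Real.cosh (r / ρ) / Real.sinh (r / ρ)) : ℝ) * deriv φν r
        + ν * φν r = 0) :
    ∀ r ∈ Set.Ioc (0 : ℝ) (π * ρ / (2 * p)), φμ r ≠ φν r := by
  obtain ⟨m, rfl⟩ : ∃ m, k = m + 1 := ⟨k - 1, by omega⟩
  intro r hr heq
  have hr0 : 0 < r := hr.1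
  have hρC : (ρ : ℂ) ≠ 0 := by exact_mod_cast hρ.ne'
  have hs : 0 < r / ρ := by positivity
  have hrs : ρ * (r / ρ) = r := by field_simp
  have Sμ := OneRadius.sol_scale hρ hμα hcμ h0μ hdμ heqμ
  have Sν := OneRadius.sol_scale hρ hνβ hcν h0ν hdν heqν
  have flip : ∀ γ : ℂ, OneRadius.Sol (m + 1) (γ * ((m + 1 : ℕ) : ℂ) - γ ^ 2)
      (fun r => OneRadius.I0 m (((m + 1 : ℕ) : ℂ) - γ) r / (OneRadius.N m : ℂ))
      (fun r => OneRadius.I1 m (((m + 1 : ℕ) : ℂ) - γ) r / (OneRadius.N m : ℂ)) := by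
    intro γ
    have := OneRadius.sol_I m (((m + 1 : ℕ) : ℂ) - γ)
    have e : (((m + 1 : ℕ) : ℂ) - γ) * ((m + 1 : ℕ) : ℂ) - (((m + 1 : ℕ) : ℂ) - γ) ^ 2
        = γ * ((m + 1 : ℕ) : ℂ) - γ ^ 2 := by ring
    rwa [e] at this
  have u1 := OneRadius.uniq hk Sμ (OneRadius.sol_I m α) _ hs
  have u2 := OneRadius.uniq hk Sμ (flip α) _ hs
  have u3 := OneRadius.uniq hk Sν (OneRadius.sol_I m β) _ hs
  have u4 := OneRadius.uniq hk Sν (flip β) _ hs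
  have hN : (OneRadius.N m : ℂ) ≠ 0 := by exact_mod_cast (OneRadius.N_pos m).ne'
  simp only [hrs] at u1 u2 u3 u4
  rw [eq_div_iff hN] at u1 u2 u3 u4
  refine OneRadius.I_ne m α β ?_ (r / ρ) hs ?_ ?_
  · intro h
    apply hμν
    rw [hμα, hνβ, h]
  · rw [← hp]
    have h2 := hr.2
    rw [le_div_iff₀ (by positivity)] at h2
    rw [mul_div_assoc', div_le_iff₀ hρ]
    linarith
  · rw [← u1, ← u2, ← u3, ← u4, heq]
end

section
/- Fix ρ > 0 and an integer k ≥ 1. Let λ ∈ ℝ and let φ : ℝ → ℝ be a normalized radial eigenfunction on [0, ∞) with eigenvalue λ. Then φ has a zero in (0, ∞) if and only if λ > k²/(4ρ²). Moreover, if λ > k²/(4ρ²), then the set {r ∈ (0,∞) : φ(r) = 0} is infinite. -/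
open MeasureTheory Real

lemma radial_osc
    (ρ : ℝ) (hρ : 0 < ρ) (a : ℝ) (ha : 0 < a)
    (lam : ℝ) (φ : ℝ → ℝ)
    (hd : ∀ r : ℝ, 0 < r → DifferentiableAt ℝ φ r ∧ DifferentiableAt ℝ (deriv φ) r)
    (heq : ∀ r : ℝ, 0 < r →
      deriv (deriv φ) r
        + (2 * a) * (Real.cosh (r / ρ) / Real.sinh (r / ρ)) * deriv φ r
        + lam * φ r = 0)
    (hl : a ^ 2 < lam) (T : ℝ) : ∃ r, T < r ∧ 0 < r ∧ φ r = 0 := by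
  by_contra hcon
  push Not at hcon
  obtain ⟨d, hd0, hdl⟩ : ∃ d : ℝ, 0 < d ∧ 2 * d ^ 2 = lam - a ^ 2 := by
    refine ⟨√((lam - a ^ 2) / 2), Real.sqrt_pos.2 (by linarith), ?_⟩
    rw [Real.sq_sqrt (by linarith)]; ring
  set S : ℝ := max (max T 0 + 1) (ρ * (a / d)) with hS
  have hST : T < S := lt_of_lt_of_le (by linarith [le_max_left T 0]) (le_max_left _ _)
  have hS0 : 0 < S := lt_of_lt_of_le (by linarith [le_max_right T 0]) (le_max_left _ _)
  have hSd : ρ * (a / d) ≤ S := le_max_right _ _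
  set y : ℝ → ℝ := fun r => deriv φ r / φ r + a * (Real.cosh (r / ρ) / Real.sinh (r / ρ)) with hy
  have hyd : ∀ r, S ≤ r → ∃ y', HasDerivAt y y' r ∧ y' ≤ - (y r ^ 2 + d ^ 2) := by
    intro r hr
    have hr0 : 0 < r := by linarith
    have hφ : φ r ≠ 0 := hcon r (by linarith) hr0
    have hrρ : 0 < r / ρ := by positivity
    have hs : 0 < Real.sinh (r / ρ) := Real.sinh_pos_iff.2 hrρ
    have h1 := (hd r hr0).1.hasDerivAt
    have h2 := (hd r hr0).2.hasDerivAt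
    have hid : HasDerivAt (fun x : ℝ => x / ρ) (1 / ρ) r := (hasDerivAt_id r).div_const ρ
    have hsd := hid.sinh
    have hcd := hid.cosh
    refine ⟨_, (h2.div h1 hφ).add ((hcd.div hsd hs.ne').const_mul a), ?_⟩
    have e := heq r hr0
    have hcs := Real.cosh_sq (r / ρ)
    have hbig : a / d ≤ Real.sinh (r / ρ) := by
      have : a / d ≤ r / ρ := by
        rw [le_div_iff₀ hρ]; linarith
      exact this.trans (Real.self_le_sinh_iff.2 hrρ.le)
    have hb2 : a ^ 2 / Real.sinh (r / ρ) ^ 2 ≤ d ^ 2 := by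
      rw [div_le_iff₀ (by positivity), ← mul_pow]
      rw [div_le_iff₀ hd0] at hbig
      exact pow_le_pow_left₀ ha.le (by linarith) 2
    have hneg : 0 ≤ a / ρ / Real.sinh (r / ρ) ^ 2 := by positivity
    have e2 : deriv (deriv φ) r = - ((2 * a) * (Real.cosh (r / ρ) / Real.sinh (r / ρ)) * deriv φ r
        + lam * φ r) := by linarith
    rw [e2]
    simp only [hy]
    generalize Real.sinh (r / ρ) = s at *
    generalize Real.cosh (r / ρ) = c at *
    generalize deriv φ r = p at *
    generalize φ r = q at *
    have key : ((-(2 * a * (c / s) * p + lam * q)) * q - p * p) / q ^ 2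
        + a * ((s * (1 / ρ) * s - c * (c * (1 / ρ))) / s ^ 2)
        = - (p / q + a * (c / s)) ^ 2 + a ^ 2 + a ^ 2 / s ^ 2 - lam - a / ρ / s ^ 2 := by
      have hs' := hs.ne'
      field_simp
      rw [hcs]
      linear_combination q ^ 2 * a ^ 2 * ρ * hcs
    rw [key]
    linarith
  have hanti : AntitoneOn (fun r => Real.arctan (y r / d) + d * r) (Set.Ici S) := by
    have hD : ∀ r, S ≤ r → ∃ z, HasDerivAt (fun r => Real.arctan (y r / d) + d * r) z r ∧ z ≤ 0 := by
      intro r hr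
      obtain ⟨y', h1, h2⟩ := hyd r hr
      refine ⟨_, ((h1.div_const d).arctan).add ((hasDerivAt_id r).const_mul d), ?_⟩
      have : 1 / (1 + (y r / d) ^ 2) * (y' / d) = y' * d / (d ^ 2 + y r ^ 2) := by
        field_simp
      rw [this, mul_one]
      have h3 : y' * d / (d ^ 2 + y r ^ 2) ≤ - d := by
        rw [div_le_iff₀ (by positivity)]
        nlinarith
      linarith
    refine antitoneOn_of_deriv_nonpos (convex_Ici S) ?_ ?_ ?_
    · intro r hr
      obtain ⟨z, hz, _⟩ := hD r hr
      exact hz.continuousAt.continuousWithinAt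
    · intro r hr
      rw [interior_Ici] at hr
      obtain ⟨z, hz, _⟩ := hD r hr.le
      exact hz.differentiableAt.differentiableWithinAt
    · intro r hr
      rw [interior_Ici] at hr
      obtain ⟨z, hz, hz0⟩ := hD r hr.le
      rw [hz.deriv]; exact hz0
  have h := hanti (Set.self_mem_Ici (a := S)) (show S + π / d + 1 ∈ Set.Ici S from by
    have : 0 < π / d := by positivity
    show S ≤ _
    linarith) (by
    have : 0 < π / d := by positivity
    linarith)
  simp only at h
  have h1 := Real.arctan_lt_pi_div_two (y S / d)
  have h2 := Real.neg_pi_div_two_lt_arctan (y (S + π / d + 1) / d)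
  have h3 : d * (S + π / d + 1) = d * S + π + d := by field_simp
  linarith

lemma radial_pos
    (ρ : ℝ) (hρ : 0 < ρ) (k : ℕ) (hk : 1 ≤ k) (a : ℝ) (hak : (k : ℝ) / ρ = 2 * a)
    (lam : ℝ) (φ : ℝ → ℝ)
    (hc : ContinuousOn φ (Set.Ici 0)) (h0 : φ 0 = 1)
    (hd : ∀ r : ℝ, 0 < r → DifferentiableAt ℝ φ r ∧ DifferentiableAt ℝ (deriv φ) r)
    (heq : ∀ r : ℝ, 0 < r →
      deriv (deriv φ) r
        + (2 * a) * (Real.cosh (r / ρ) / Real.sinh (r / ρ)) * deriv φ r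
        + lam * φ r = 0)
    (hl : lam ≤ a ^ 2) (R₀ : ℝ) (hR₀ : 0 < R₀) (hz : φ R₀ = 0) : False := by
  -- first zero
  obtain ⟨R, hR, hφR, hpos⟩ : ∃ R, 0 < R ∧ φ R = 0 ∧ ∀ r, 0 ≤ r → r < R → 0 < φ r := by
    have hcl : IsCompact (Set.Icc 0 R₀ ∩ φ ⁻¹' {0}) :=
      isCompact_Icc.of_isClosed_subset
        ((hc.mono Set.Icc_subset_Ici_self).preimage_isClosed_of_isClosed isClosed_Icc
          isClosed_singleton) Set.inter_subset_left
    obtain ⟨R, ⟨⟨hR0, hRR⟩, hRz⟩, hmin⟩ := hcl.exists_isLeast ⟨R₀, ⟨hR₀.le, le_rfl⟩, hz⟩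
    have hRz' : φ R = 0 := hRz
    refine ⟨R, lt_of_le_of_ne hR0 ?_, hRz', ?_⟩
    · rintro rfl
      rw [h0] at hRz'; norm_num at hRz'
    · intro r hr hrR
      by_contra hneg
      push Not at hneg
      have := intermediate_value_Icc' hr (hc.mono Set.Icc_subset_Ici_self)
        (show (0 : ℝ) ∈ Set.Icc (φ r) (φ 0) from ⟨hneg, by rw [h0]; norm_num⟩)
      obtain ⟨x, hx, hx0⟩ := this
      have := hmin ⟨⟨hx.1, by linarith [hx.2]⟩, hx0⟩
      linarith [hx.2]
  set g : ℝ → ℝ := fun r => φ r * Real.exp (a * r) with hg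
  have hgd : ∀ r, 0 < r → HasDerivAt g ((deriv φ r + a * φ r) * Real.exp (a * r)) r := by
    intro r hr
    have h1 := (hd r hr).1.hasDerivAt
    have h2 : HasDerivAt (fun r => Real.exp (a * r)) (Real.exp (a * r) * (a * 1)) r :=
      ((hasDerivAt_id r).const_mul a).exp
    refine (h1.mul h2).congr_deriv ?_
    ring
  have hgc : ContinuousOn g (Set.Ici 0) := hc.mul (by fun_prop)
  set P : ℝ → ℝ := fun r => Real.sinh (r / ρ) ^ k * ((deriv φ r + a * φ r) * Real.exp (-(a * r)))
    with hP
  have hPd : ∀ r, 0 < r → HasDerivAt P (Real.sinh (r / ρ) ^ k * Real.exp (-(a * r)) *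
      (φ r * (2 * a ^ 2 * (Real.cosh (r / ρ) / Real.sinh (r / ρ)) - lam - a ^ 2))) r := by
    intro r hr
    have hrρ : 0 < r / ρ := by positivity
    have hs : 0 < Real.sinh (r / ρ) := Real.sinh_pos_iff.2 hrρ
    have h1 := (hd r hr).1.hasDerivAt
    have h2 := (hd r hr).2.hasDerivAt
    have hid : HasDerivAt (fun x : ℝ => x / ρ) (1 / ρ) r := (hasDerivAt_id r).div_const ρ
    have h3 : HasDerivAt (fun r => Real.exp (-(a * r))) (Real.exp (-(a * r)) * (-(a * 1))) r :=
      ((hasDerivAt_id r).const_mul a).neg.exp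
    refine ((hid.sinh.pow k).mul ((h2.add (h1.const_mul a)).mul h3)).congr_deriv ?_
    have e2 : deriv (deriv φ) r = - ((2 * a) * (Real.cosh (r / ρ) / Real.sinh (r / ρ)) * deriv φ r
        + lam * φ r) := by linarith [heq r hr]
    simp only [Pi.add_apply, Pi.mul_apply, Pi.pow_apply]
    rw [e2]
    have hpow : (k : ℝ) * Real.sinh (r / ρ) ^ (k - 1) * (Real.cosh (r / ρ) * (1 / ρ))
        = Real.sinh (r / ρ) ^ k * (2 * a * (Real.cosh (r / ρ) / Real.sinh (r / ρ))) := by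
      rw [← hak]
      have : Real.sinh (r / ρ) ^ k = Real.sinh (r / ρ) ^ (k - 1) * Real.sinh (r / ρ) := by
        rw [← pow_succ]; congr 1; omega
      rw [this]
      field_simp
    rw [hpow]
    ring
  have hPmono : MonotoneOn P (Set.Ioo 0 R) := by
    refine monotoneOn_of_deriv_nonneg (convex_Ioo 0 R) ?_ ?_ ?_
    · intro r hr
      exact (hPd r hr.1).continuousAt.continuousWithinAt
    · intro r hr
      rw [interior_Ioo] at hr
      exact (hPd r hr.1).differentiableAt.differentiableWithinAt
    · intro r hr
      rw [interior_Ioo] at hr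
      rw [(hPd r hr.1).deriv]
      have hrρ : 0 < r / ρ := div_pos hr.1 hρ
      have hs : 0 < Real.sinh (r / ρ) := Real.sinh_pos_iff.2 hrρ
      have h1 : 1 ≤ Real.cosh (r / ρ) / Real.sinh (r / ρ) := by
        rw [le_div_iff₀ hs]; linarith [Real.sinh_lt_cosh (r / ρ)]
      have h2 := hpos r hr.1.le hr.2
      have h3 : 0 ≤ 2 * a ^ 2 * (Real.cosh (r / ρ) / Real.sinh (r / ρ)) - lam - a ^ 2 := by
        nlinarith [sq_nonneg a]
      positivity
  obtain ⟨ξ, hξ, hξd⟩ := exists_deriv_eq_slope g hR (hgc.mono Set.Icc_subset_Ici_self)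
    (fun r hr => (hgd r hr.1).differentiableAt.differentiableWithinAt)
  have hξneg : deriv g ξ < 0 := by
    rw [hξd]
    simp only [hg, hφR, h0]
    apply div_neg_of_neg_of_pos <;> simp [hR]
  have hPg : ∀ r, 0 < r → P r = (Real.sinh (r / ρ) * Real.exp (-(r / ρ))) ^ k * deriv g r := by
    intro r hr
    rw [(hgd r hr).deriv, mul_pow, ← Real.exp_nat_mul]
    have : (k : ℝ) * -(r / ρ) = - (a * r) + - (a * r) := by
      have : (k : ℝ) * -(r / ρ) = - (k / ρ * r) := by ring
      rw [this, hak]; ring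
    rw [this, Real.exp_add]
    have h1 : Real.exp (-(a * r)) * Real.exp (a * r) = 1 := by
      rw [← Real.exp_add]; simp
    simp only [hP]
    linear_combination -(Real.sinh (r / ρ) ^ k * (deriv φ r + a * φ r) * Real.exp (-(a * r))) * h1
  have hp : ∀ r, 0 < r → 0 < (Real.sinh (r / ρ) * Real.exp (-(r / ρ))) ^ k ∧
      (Real.sinh (r / ρ) * Real.exp (-(r / ρ))) ^ k ≤ r / ρ := by
    intro r hr
    have hrρ : 0 < r / ρ := by positivity
    have hs : 0 < Real.sinh (r / ρ) := Real.sinh_pos_iff.2 hrρ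
    have hx0 : 0 < Real.sinh (r / ρ) * Real.exp (-(r / ρ)) := by positivity
    have hx : Real.sinh (r / ρ) * Real.exp (-(r / ρ)) = (1 - Real.exp (-(2 * (r / ρ)))) / 2 := by
      rw [Real.sinh_eq]
      have h1 : Real.exp (r / ρ) * Real.exp (-(r / ρ)) = 1 := by
        rw [← Real.exp_add]; simp
      have h2 : Real.exp (-(r / ρ)) * Real.exp (-(r / ρ)) = Real.exp (-(2 * (r / ρ))) := by
        rw [← Real.exp_add]; congr 1; ring
      linear_combination h1 / 2 - h2 / 2
    have hx1 : Real.sinh (r / ρ) * Real.exp (-(r / ρ)) ≤ 1 := by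
      rw [hx]; linarith [Real.exp_pos (-(2 * (r / ρ)))]
    have hx2 : Real.sinh (r / ρ) * Real.exp (-(r / ρ)) ≤ r / ρ := by
      rw [hx]; linarith [Real.add_one_le_exp (-(2 * (r / ρ)))]
    exact ⟨by positivity, (pow_le_of_le_one hx0.le hx1 (by omega)).trans hx2⟩
  have hPξ : P ξ < 0 := by
    rw [hPg ξ hξ.1]; exact mul_neg_of_pos_of_neg (hp ξ hξ.1).1 hξneg
  obtain ⟨C, hC, hC0⟩ : ∃ C, P ξ * ρ = -C ∧ 0 < C := ⟨-(P ξ * ρ), by ring, by nlinarith⟩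
  have hanti : AntitoneOn (fun r => g r + C * Real.log r) (Set.Ioc 0 ξ) := by
    have hD : ∀ r, 0 < r → HasDerivAt (fun r => g r + C * Real.log r) (deriv g r + C * r⁻¹) r := by
      intro r hr
      exact (hgd r hr).differentiableAt.hasDerivAt.add ((Real.hasDerivAt_log hr.ne').const_mul C)
    refine antitoneOn_of_deriv_nonpos (convex_Ioc 0 ξ) ?_ ?_ ?_
    · intro r hr
      exact (hD r hr.1).continuousAt.continuousWithinAt
    · intro r hr
      rw [interior_Ioc] at hr
      exact (hD r hr.1).differentiableAt.differentiableWithinAt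
    · intro r hr
      rw [interior_Ioc] at hr
      rw [(hD r hr.1).deriv]
      have h1 := hPmono (⟨hr.1, hr.2.trans hξ.2⟩ : r ∈ Set.Ioo 0 R) hξ hr.2.le
      rw [hPg r hr.1] at h1
      obtain ⟨hp1, hp2⟩ := hp r hr.1
      have hneg : deriv g r < 0 := by
        by_contra hh
        push Not at hh
        have := mul_nonneg hp1.le hh
        linarith
      have h2 : r / ρ * deriv g r ≤ P ξ := by nlinarith
      have h3 : r * deriv g r ≤ -C := by
        rw [← hC, ← div_le_iff₀ hρ]
        calc r * deriv g r / ρ = r / ρ * deriv g r := by ring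
          _ ≤ _ := h2
      have h4 : deriv g r + C * r⁻¹ = (r * deriv g r + C) / r := by
        have := hr.1.ne'
        field_simp
      rw [h4]
      exact div_nonpos_of_nonpos_of_nonneg (by linarith) hr.1.le
  have hgt : Filter.Tendsto g (nhdsWithin 0 (Set.Ioi 0)) (nhds (g 0)) :=
    (hgc 0 Set.self_mem_Ici).mono_left (nhdsWithin_mono _ Set.Ioi_subset_Ici_self)
  have hlog : Filter.Tendsto (fun r => C * Real.log r) (nhdsWithin 0 (Set.Ioi 0)) Filter.atBot :=
    (Real.tendsto_log_nhdsGT_zero).const_mul_atBot hC0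
  have hbot := hgt.add_atBot hlog
  have hev := hbot.eventually (Filter.eventually_lt_atBot (g ξ + C * Real.log ξ))
  have hev2 : ∀ᶠ r in nhdsWithin (0 : ℝ) (Set.Ioi 0), r ∈ Set.Ioc 0 ξ := Ioc_mem_nhdsGT hξ.1
  obtain ⟨r, hr1, hr2⟩ := (hev.and hev2).exists
  have := hanti hr2 ⟨hξ.1, le_rfl⟩ hr2.2
  simp only at this
  linarith





/-- A normalized radial eigenfunction with real eigenvalue `λ` vanishes somewhere on
`(0, ∞)` iff `λ > k²/(4ρ²)`; and in that case it has infinitely many positive zeros. -/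
theorem radial_eigenfunction_vanishing_iff
    (ρ : ℝ) (hρ : 0 < ρ) (k : ℕ) (hk : 1 ≤ k)
    (lam : ℝ) (φ : ℝ → ℝ)
    (hc : ContinuousOn φ (Set.Ici 0)) (h0 : φ 0 = 1)
    (hd : ∀ r : ℝ, 0 < r → DifferentiableAt ℝ φ r ∧ DifferentiableAt ℝ (deriv φ) r)
    (heq : ∀ r : ℝ, 0 < r →
      deriv (deriv φ) r
        + ((k : ℝ) / ρ) * (Real.cosh (r / ρ) / Real.sinh (r / ρ)) * deriv φ r
        + lam * φ r = 0) :
    ((∃ r : ℝ, 0 < r ∧ φ r = 0) ↔ (k : ℝ) ^ 2 / (4 * ρ ^ 2) < lam)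
    ∧ ((k : ℝ) ^ 2 / (4 * ρ ^ 2) < lam → {r : ℝ | 0 < r ∧ φ r = 0}.Infinite) := by
  have hak : (k : ℝ) / ρ = 2 * (k / (2 * ρ)) := by field_simp
  have ha2 : (k : ℝ) ^ 2 / (4 * ρ ^ 2) = (k / (2 * ρ)) ^ 2 := by
    rw [div_pow]; ring
  have hk0 : (0 : ℝ) < k := by exact_mod_cast hk
  have ha : (0 : ℝ) < k / (2 * ρ) := by positivity
  rw [hak] at heq
  rw [ha2]
  have hosc := radial_osc ρ hρ _ ha lam φ hd heq
  refine ⟨⟨?_, ?_⟩, ?_⟩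
  · rintro ⟨r, hr, hz⟩
    by_contra hl
    exact radial_pos ρ hρ k hk _ hak lam φ hc h0 hd heq (not_lt.1 hl) r hr hz
  · intro hl
    obtain ⟨r, _, h⟩ := hosc hl 0
    exact ⟨r, h⟩
  · intro hl hfin
    obtain ⟨T, hT⟩ := hfin.bddAbove
    obtain ⟨r, h1, h2⟩ := hosc hl T
    linarith [hT h2]
end
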